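/- Let V be a complex Banach space and let A : ℝ → Matrix (Fin p) (Fin p) ℂ be bounded and continuous with every entry almost automorphic, with fundamental matrix Φ_A, and suppose y' = A(t)y has an α-exponential dichotomy with constants c, α > 0 whose projection P commutes with Φ_A(t) for every t. Let f : ℝ → (Fin p → V) be bounded, continuous and almost automorphic. Then y(t) = ∫_ℝ G_A(t,s)·f(s) ds is the unique bounded differentiable solution of y'(t) = A(t)·y(t) + f(t) on ℝ (where the matrix acts on (Fin p → V) by scalar multiplication of entries), y is almost automorphic, and sup_{t∈ℝ} ‖y(t)‖ ≤ (2c/α)·sup_{t∈ℝ} ‖f(t)‖. -/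

import Mathlib

open MeasureTheory Filter Topology

attribute [local instance] Matrix.linftyOpNormedAddCommGroup Matrix.linftyOpNormedRing
  Matrix.linftyOpNormedAlgebra

/-- A continuous function `ψ : ℝ → V` into a Banach space is almost automorphic if for every
sequence of reals there is a subsequence `(τₙ)` and a function `ψ̃` with
`ψ(t+τₙ) → ψ̃(t)` and `ψ̃(t−τₙ) → ψ(t)` pointwise on `ℝ`. -/
def AlmostAutomorphic {V : Type*} [NormedAddCommGroup V] (ψ : ℝ → V) : Prop :=
  Continuous ψ ∧ ∀ σ : ℕ → ℝ, ∃ k : ℕ → ℕ, StrictMono k ∧ ∃ ψt : ℝ → V,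
    (∀ t : ℝ, Tendsto (fun n => ψ (t + σ (k n))) atTop (𝓝 (ψt t))) ∧
    (∀ t : ℝ, Tendsto (fun n => ψt (t - σ (k n))) atTop (𝓝 (ψ t)))

/-- `Φ` is a fundamental matrix of `y' = A(t) y`: it is differentiable with
`Φ'(t) = A(t) Φ(t)` and `Φ(t)` invertible for every `t`. -/
def IsFundamentalMatrix {p : ℕ} (A Φ : ℝ → Matrix (Fin p) (Fin p) ℂ) : Prop :=
  (∀ t : ℝ, HasDerivAt Φ (A t * Φ t) t) ∧ ∀ t : ℝ, IsUnit (Φ t)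

/-- The Green matrix associated with a projection `P` and a fundamental matrix `Φ`. -/
noncomputable def GreenMat {p : ℕ} (Φ : ℝ → Matrix (Fin p) (Fin p) ℂ)
    (P : Matrix (Fin p) (Fin p) ℂ) (t s : ℝ) : Matrix (Fin p) (Fin p) ℂ :=
  if s ≤ t then Φ t * (Φ s)⁻¹ * P else -(Φ t * (Φ s)⁻¹ * (1 - P))

/-- The action of a complex `p × p` matrix on vectors with entries in a complex vector space. -/
def matSMulVec {V : Type*} [AddCommGroup V] [Module ℂ V] {p : ℕ}
    (M : Matrix (Fin p) (Fin p) ℂ) (v : Fin p → V) : Fin p → V :=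
  fun i => ∑ j : Fin p, M i j • v j

open scoped Ring Matrix.Module

/-!
Two bounded solutions of `y' = A(t) y + f(t)` differ by some `w = Φ v`. As `P` commutes with `Φ`,
`P w(t) = G(t,s) w(s)` for `s ≤ t` and `(1 - P) w(t) = -G(t,s) w(s)` for `s > t`; letting
`s → ∓∞` gives `w = 0`. For existence, the jump of `G` across the diagonal is the identity, so
`Φ⁻¹ y` is a primitive of `Φ⁻¹ f` for `y(t) = ∫ G(t,s) f(s) ds`. Finally
`u(s) = y(s + a) - y(s + b)` is the bounded solution of the equation translated by `a`, forced by
`(A(s + a) - A(s + b)) y(s + b) + f(s + a) - f(s + b)`, which bounds `‖y(a) - y(b)‖` by a weighted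
integral of `‖ψ(s + a) - ψ(s + b)‖` with `ψ = (A, f)`. By dominated convergence such an estimate
carries almost automorphy over from `ψ` to `y`.
-/

theorem integral_exp_neg_mul_abs_sub {α : ℝ} (hα : 0 < α) (t : ℝ) :
    ∫ s : ℝ, Real.exp (-α * |t - s|) = 2 / α := by
  rw [integral_sub_left_eq_self (fun s : ℝ => Real.exp (-α * |s|)) volume t,
    integral_comp_abs (f := fun s => Real.exp (-α * s)),
    integral_exp_mul_Ioi (neg_lt_zero.mpr hα) 0, mul_zero, Real.exp_zero, neg_div_neg_eq,
    mul_one_div]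

theorem integrable_exp_neg_mul_abs_sub {α : ℝ} (hα : 0 < α) (t : ℝ) :
    Integrable (fun s : ℝ => Real.exp (-α * |t - s|)) :=
  .of_integral_ne_zero (by rw [integral_exp_neg_mul_abs_sub hα]; positivity)

theorem tendsto_exp_neg_mul_abs_sub_cocompact {α : ℝ} (hα : 0 < α) (t : ℝ) :
    Tendsto (fun s : ℝ => Real.exp (-α * |t - s|)) (cocompact ℝ) (𝓝 0) :=
  Real.tendsto_exp_atBot.comp
    ((tendsto_dist_left_cocompact_atTop t).const_mul_atTop_of_neg (neg_lt_zero.mpr hα))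

theorem tendsto_integral_mul_norm {ι X E : Type*} [MeasurableSpace X] {μ : Measure X}
    [NormedAddCommGroup E] {l : Filter ι} [l.IsCountablyGenerated] {k : X → ℝ} {C : ℝ}
    {d : ι → X → E} {d₀ : X → E} (hk : Integrable k μ) (hdm : ∀ i, AEStronglyMeasurable (d i) μ)
    (hdC : ∀ i x, ‖d i x‖ ≤ C) (hd : ∀ x, Tendsto (fun i => d i x) l (𝓝 (d₀ x))) :
    Tendsto (fun i => ∫ x, k x * ‖d i x‖ ∂μ) l (𝓝 (∫ x, k x * ‖d₀ x‖ ∂μ)) := by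
  refine tendsto_integral_filter_of_dominated_convergence (fun x => ‖k x‖ * C)
    (.of_forall fun i => hk.aestronglyMeasurable.mul (hdm i).norm)
    (.of_forall fun i => .of_forall fun x => ?_) (hk.norm.mul_const C)
    (.of_forall fun x => (hd x).norm.const_mul (k x))
  rw [norm_mul, norm_norm]
  gcongr
  exact hdC i x

section TranslationEstimate

variable {E F : Type*} [NormedAddCommGroup E] [NormedAddCommGroup F] {ψ : ℝ → E} {y : ℝ → F}
  {k : ℝ → ℝ}

theorem tendsto_norm_sub_of_norm_sub_le_integral {ι : Type*} {l : Filter ι} [l.IsCountablyGenerated]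
    {C : ℝ} (hψ : Continuous ψ) (hC : ∀ t, ‖ψ t‖ ≤ C) (hk : Integrable k)
    (h : ∀ a b, ‖y a - y b‖ ≤ ∫ s, k s * ‖ψ (s + a) - ψ (s + b)‖) {a b : ι → ℝ}
    (hab : ∀ s, Tendsto (fun i => ψ (s + a i) - ψ (s + b i)) l (𝓝 0)) :
    Tendsto (fun i => ‖y (a i) - y (b i)‖) l (𝓝 0) := by
  refine squeeze_zero (fun _ => norm_nonneg _) (fun i => h (a i) (b i)) ?_
  simpa using tendsto_integral_mul_norm hk
    (fun i => Continuous.aestronglyMeasurable (by fun_prop))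
    (fun i s => norm_sub_le_of_le (hC _) (hC _)) hab

theorem tendsto_sub_of_norm_sub_le_integral {ψt : ℝ → E} {yt : ℝ → F} {C : ℝ}
    (hψ : Continuous ψ) (hC : ∀ t, ‖ψ t‖ ≤ C) (hk : Integrable k)
    (h : ∀ a b, ‖y a - y b‖ ≤ ∫ s, k s * ‖ψ (s + a) - ψ (s + b)‖) {τ : ℕ → ℝ}
    (hψt : ∀ t, Tendsto (fun n => ψ (t + τ n)) atTop (𝓝 (ψt t)))
    (hψ_sub : ∀ t, Tendsto (fun n => ψt (t - τ n)) atTop (𝓝 (ψ t)))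
    (hyt : ∀ t, Tendsto (fun n => y (t + τ n)) atTop (𝓝 (yt t))) (t : ℝ) :
    Tendsto (fun n => yt (t - τ n)) atTop (𝓝 (y t)) := by
  have hψtm : StronglyMeasurable ψt := stronglyMeasurable_of_tendsto atTop
    (fun n => Continuous.stronglyMeasurable (by fun_prop)) (tendsto_pi_nhds.2 hψt)
  have hψtC : ∀ s, ‖ψt s‖ ≤ C := fun s => le_of_tendsto' (hψt s).norm fun n => hC _
  have hbound : ∀ r, ‖yt r - y t‖ ≤ ∫ s, k s * ‖ψt (s + r) - ψ (s + t)‖ := fun r => by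
    refine le_of_tendsto_of_tendsto' ((hyt r).sub_const (y t)).norm ?_ (fun m => h (r + τ m) t)
    refine tendsto_integral_mul_norm hk (fun m => Continuous.aestronglyMeasurable (by fun_prop))
      (fun m s => norm_sub_le_of_le (hC _) (hC _)) fun s => ?_
    simpa only [add_assoc] using (hψt (s + r)).sub_const (ψ (s + t))
  refine tendsto_iff_norm_sub_tendsto_zero.2
    (squeeze_zero (fun _ => norm_nonneg _) (fun n => hbound (t - τ n)) ?_)
  have hlim : ∀ s, Tendsto (fun n => ψt (s + (t - τ n)) - ψ (s + t)) atTop (𝓝 0) := fun s => by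
    simpa only [add_sub_assoc] using tendsto_sub_nhds_zero_iff.2 (hψ_sub (s + t))
  simpa using tendsto_integral_mul_norm hk
    (fun n => ((hψtm.comp_measurable (measurable_add_const _)).sub
      (Continuous.stronglyMeasurable (by fun_prop))).aestronglyMeasurable)
    (fun n s => norm_sub_le_of_le (hψtC _) (hC _)) hlim

end TranslationEstimate

namespace AlmostAutomorphic

variable {E F : Type*} [NormedAddCommGroup E] [NormedAddCommGroup F]

theorem comp {ψ : ℝ → E} (hψ : AlmostAutomorphic ψ) {g : E → F} (hg : Continuous g) :
    AlmostAutomorphic (fun t => g (ψ t)) := by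
  refine ⟨hg.comp hψ.1, fun σ => ?_⟩
  obtain ⟨k, hk, ψt, h₁, h₂⟩ := hψ.2 σ
  exact ⟨k, hk, g ∘ ψt, fun t => (hg.tendsto _).comp (h₁ t), fun t => (hg.tendsto _).comp (h₂ t)⟩

theorem prodMk {ψ : ℝ → E} {φ : ℝ → F} (hψ : AlmostAutomorphic ψ) (hφ : AlmostAutomorphic φ) :
    AlmostAutomorphic (fun t => (ψ t, φ t)) := by
  refine ⟨hψ.1.prodMk hφ.1, fun σ => ?_⟩
  obtain ⟨k, hk, ψt, h₁, h₂⟩ := hψ.2 σ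
  obtain ⟨l, hl, φt, h₃, h₄⟩ := hφ.2 (σ ∘ k)
  exact ⟨k ∘ l, hk.comp hl, fun t => (ψt t, φt t),
    fun t => ((h₁ t).comp hl.tendsto_atTop).prodMk_nhds (h₃ t),
    fun t => ((h₂ t).comp hl.tendsto_atTop).prodMk_nhds (h₄ t)⟩

theorem sum {ι : Type*} (s : Finset ι) {ψ : ι → ℝ → E} (hψ : ∀ i, AlmostAutomorphic (ψ i)) :
    AlmostAutomorphic (fun t => ∑ i ∈ s, ψ i t) := by
  classical
  induction s using Finset.induction_on with
  | empty => exact ⟨continuous_const, fun _ => ⟨id, strictMono_id, fun _ => 0, by simp⟩⟩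
  | insert i s his ih =>
    simpa only [Finset.sum_insert his] using ((hψ i).prodMk ih).comp continuous_add

theorem of_matrix_entries {m n : Type*} [Fintype m] [Fintype n] {A : ℝ → Matrix m n E}
    (hA : ∀ i j, AlmostAutomorphic (fun t => A t i j)) : AlmostAutomorphic A := by
  classical
  rw [funext fun t => Matrix.matrix_eq_sum_single (A t)]
  refine sum _ fun i => sum _ fun j => (hA i j).comp ?_
  exact continuous_matrix fun i' j' => by
    simp only [Matrix.single_apply]
    split_ifs <;> fun_prop

theorem exists_norm_le {ψ : ℝ → E} (hψ : AlmostAutomorphic ψ) : ∃ C, ∀ t, ‖ψ t‖ ≤ C := by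
  by_contra! hunbdd
  choose σ hσ using fun n : ℕ => hunbdd n
  obtain ⟨k, hk, ψt, hlim, -⟩ := hψ.2 σ
  refine not_tendsto_nhds_of_tendsto_atTop ?_ _ (hlim 0).norm
  refine tendsto_atTop_mono (fun n => ?_) (tendsto_natCast_atTop_atTop.comp hk.tendsto_atTop)
  simpa using (hσ (k n)).le

theorem of_norm_sub_le_integral [CompleteSpace F] {ψ : ℝ → E} {y : ℝ → F} {k : ℝ → ℝ}
    (hψ : AlmostAutomorphic ψ) (hk : Integrable k)
    (h : ∀ a b, ‖y a - y b‖ ≤ ∫ s, k s * ‖ψ (s + a) - ψ (s + b)‖) : AlmostAutomorphic y := by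
  obtain ⟨C, hC⟩ := hψ.exists_norm_le
  have hψc : Continuous ψ := hψ.1
  constructor
  · refine continuous_iff_continuousAt.2 fun b => tendsto_iff_norm_sub_tendsto_zero.2 ?_
    refine tendsto_norm_sub_of_norm_sub_le_integral hψc hC hk h fun s => ?_
    exact tendsto_sub_nhds_zero_iff.2 (Continuous.tendsto (by fun_prop) b)
  · intro σ
    obtain ⟨κ, hκ, ψt, hψt, hψ_sub⟩ := hψ.2 σ
    have hcauchy : ∀ t, CauchySeq (fun n => y (t + σ (κ n))) := fun t => by
      simp_rw [cauchySeq_iff_tendsto_dist_atTop_0, dist_eq_norm]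
      refine tendsto_norm_sub_of_norm_sub_le_integral hψc hC hk h fun s => ?_
      simp only [← add_assoc, ← prod_atTop_atTop_eq]
      simpa only [sub_self, Function.comp_def] using ((hψt (s + t)).comp tendsto_fst).sub
        ((hψt (s + t)).comp tendsto_snd)
    choose yt hyt using fun t => cauchySeq_tendsto_of_complete (hcauchy t)
    exact ⟨κ, hκ, yt, hyt, tendsto_sub_of_norm_sub_le_integral hψc hC hk h hψt hψ_sub hyt⟩

end AlmostAutomorphic

/-- The Green function, in an arbitrary ring, of a linear equation with fundamental solution `Φ`
and projection `P`; for matrices it is `GreenMat`. Only meaningful when every `Φ s` is a unit,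
as `(Φ s)⁻¹ʳ = 0` otherwise. -/
noncomputable def greenFunction {R : Type*} [Ring R] (Φ : ℝ → R) (P : R) (t s : ℝ) : R :=
  if s ≤ t then Φ t * (Φ s)⁻¹ʳ * P else -(Φ t * (Φ s)⁻¹ʳ * (1 - P))

/-- The candidate `∫ G(t,s) f(s) ds` for the bounded solution of `y' = A(t) y + f(t)`. -/
noncomputable def greenIntegral {R W : Type*} [Ring R] [NormedAddCommGroup W] [NormedSpace ℝ W]
    [Module R W] (Φ : ℝ → R) (P : R) (f : ℝ → W) (t : ℝ) : W :=
  ∫ s, greenFunction Φ P t s • f s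

section GreenFunction

variable {R : Type*} [Ring R] {Φ : ℝ → R} {P : R} {s t : ℝ}

theorem greenFunction_of_le (h : s ≤ t) : greenFunction Φ P t s = Φ t * (Φ s)⁻¹ʳ * P :=
  if_pos h

theorem greenFunction_of_lt (h : t < s) : greenFunction Φ P t s = -(Φ t * (Φ s)⁻¹ʳ * (1 - P)) :=
  if_neg h.not_ge

theorem greenFunction_mul_of_le (hs : IsUnit (Φ s)) (hP : ∀ r, Commute (Φ r) P) (h : s ≤ t) :
    greenFunction Φ P t s * Φ s = P * Φ t := by
  rw [greenFunction_of_le h, mul_assoc, ← (hP s).eq, mul_assoc, Ring.inverse_mul_cancel_left _ _ hs,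
    (hP t).eq]

theorem greenFunction_mul_of_lt (hs : IsUnit (Φ s)) (hP : ∀ r, Commute (Φ r) P) (h : t < s) :
    greenFunction Φ P t s * Φ s = -((1 - P) * Φ t) := by
  have hQ : ∀ r, Commute (Φ r) (1 - P) := fun r => (Commute.one_right _).sub_right (hP r)
  rw [greenFunction_of_lt h, neg_mul, mul_assoc, ← (hQ s).eq, mul_assoc,
    Ring.inverse_mul_cancel_left _ _ hs, (hQ t).eq]

theorem inverse_mul_greenFunction_sub (hΦ : ∀ r, IsUnit (Φ r)) {r : ℝ} (hrt : r ≤ t) (s : ℝ) :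
    (Φ t)⁻¹ʳ * greenFunction Φ P t s - (Φ r)⁻¹ʳ * greenFunction Φ P r s =
      (Set.Ioc r t).indicator (fun s => (Φ s)⁻¹ʳ) s := by
  have hcancel : ∀ u x, (Φ u)⁻¹ʳ * (Φ u * x) = x := fun u x =>
    Ring.inverse_mul_cancel_left _ x (hΦ u)
  rcases le_or_gt s r with hsr | hrs
  · simp [greenFunction_of_le hsr, greenFunction_of_le (hsr.trans hrt), hcancel, hsr.not_gt,
      mul_assoc]
  rcases le_or_gt s t with hst | hts
  · simp [greenFunction_of_le hst, greenFunction_of_lt hrs, hcancel, hrs, hst, mul_assoc, mul_sub]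
  · simp [greenFunction_of_lt hrs, greenFunction_of_lt hts, hcancel, hts.not_ge, mul_assoc]

end GreenFunction

/-- `Φ` is an invertible solution of `Φ' = A(t) Φ` in a normed algebra, the analogue of
`IsFundamentalMatrix`. -/
structure IsFundamentalSolution {𝔸 : Type*} [NormedRing 𝔸] [NormedAlgebra ℝ 𝔸] (A Φ : ℝ → 𝔸) :
    Prop where
  hasDerivAt : ∀ t, HasDerivAt Φ (A t * Φ t) t
  isUnit : ∀ t, IsUnit (Φ t)

namespace IsFundamentalSolution

variable {𝔸 W : Type*} [NormedRing 𝔸] [NormedAlgebra ℝ 𝔸] {A Φ : ℝ → 𝔸}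

theorem comp_add_const (hΦ : IsFundamentalSolution A Φ) (a : ℝ) :
    IsFundamentalSolution (fun t => A (t + a)) (fun t => Φ (t + a)) :=
  ⟨fun t => (hΦ.hasDerivAt (t + a)).comp_add_const t a, fun t => hΦ.isUnit (t + a)⟩

variable [NormedAddCommGroup W] [Module 𝔸 W] [IsBoundedSMul 𝔸 W]

theorem inverse_smul_greenIntegral_sub [NormedSpace ℝ W] [IsScalarTower ℝ 𝔸 W]
    (hΦ : IsFundamentalSolution A Φ) {P : 𝔸} {f : ℝ → W}
    (hint : ∀ t, Integrable (fun s => greenFunction Φ P t s • f s)) (r t : ℝ) :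
    (Φ t)⁻¹ʳ • greenIntegral Φ P f t - (Φ r)⁻¹ʳ • greenIntegral Φ P f r =
      ∫ s in r..t, (Φ s)⁻¹ʳ • f s := by
  wlog hrt : r ≤ t generalizing r t
  · rw [intervalIntegral.integral_symm, ← this t r (le_of_not_ge hrt), neg_sub]
  rw [greenIntegral, greenIntegral, ← (hint t).integral_smul, ← (hint r).integral_smul,
    ← integral_sub ((hint t).fun_smul _) ((hint r).fun_smul _), intervalIntegral.integral_of_le hrt,
    ← integral_indicator measurableSet_Ioc]
  congr 1 with s
  rw [smul_smul, smul_smul, ← sub_smul, inverse_mul_greenFunction_sub hΦ.isUnit hrt,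
    Set.indicator_smul_left]

variable [HasSummableGeomSeries 𝔸]

theorem hasDerivAt_inverse (hΦ : IsFundamentalSolution A Φ) (t : ℝ) :
    HasDerivAt (fun t => (Φ t)⁻¹ʳ) (-((Φ t)⁻¹ʳ * A t)) t := by
  obtain ⟨u, hu⟩ := hΦ.isUnit t
  have hinv : HasFDerivAt Ring.inverse _ (Φ t) := hu ▸ hasFDerivAt_ringInverse (𝕜 := ℝ) u
  refine (hinv.comp_hasDerivAt t (hΦ.hasDerivAt t)).congr_deriv ?_
  simp [← hu, mul_assoc]

theorem continuous_inverse (hΦ : IsFundamentalSolution A Φ) : Continuous (fun t => (Φ t)⁻¹ʳ) :=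
  continuous_iff_continuousAt.2 fun t => (hΦ.hasDerivAt_inverse t).continuousAt

theorem aestronglyMeasurable_greenFunction_smul (hΦ : IsFundamentalSolution A Φ) {f : ℝ → W}
    (hf : Continuous f) (P : 𝔸) (t : ℝ) :
    AEStronglyMeasurable (fun s => greenFunction Φ P t s • f s) := by
  have hinv := hΦ.continuous_inverse
  exact (StronglyMeasurable.ite measurableSet_Iic
    (Continuous.stronglyMeasurable (by fun_prop))
    (Continuous.stronglyMeasurable (by fun_prop))).aestronglyMeasurable.smul
      hf.aestronglyMeasurable

variable [NormedSpace ℝ W] [IsScalarTower ℝ 𝔸 W]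

theorem exists_eq_smul (hΦ : IsFundamentalSolution A Φ) {w : ℝ → W}
    (hw : ∀ t, HasDerivAt w (A t • w t) t) : ∃ v, ∀ t, w t = Φ t • v := by
  have hderiv : ∀ t, HasDerivAt (fun t => (Φ t)⁻¹ʳ • w t) 0 t := fun t => by
    convert (hΦ.hasDerivAt_inverse t).fun_smul (hw t) using 1
    rw [neg_smul, mul_smul, add_neg_cancel]
  refine ⟨(Φ 0)⁻¹ʳ • w 0, fun t => ?_⟩
  rw [← is_const_of_deriv_eq_zero (fun r => (hderiv r).differentiableAt)
    (fun r => (hderiv r).deriv) t 0, smul_smul, Ring.mul_inverse_cancel _ (hΦ.isUnit t), one_smul]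

theorem hasDerivAt_greenIntegral [CompleteSpace W] (hΦ : IsFundamentalSolution A Φ) {P : 𝔸}
    {f : ℝ → W} (hf : Continuous f)
    (hint : ∀ t, Integrable (fun s => greenFunction Φ P t s • f s)) (t : ℝ) :
    HasDerivAt (greenIntegral Φ P f) (A t • greenIntegral Φ P f t + f t) t := by
  set y := greenIntegral Φ P f
  have hvar : ∀ t, (Φ t)⁻¹ʳ • y t = (Φ 0)⁻¹ʳ • y 0 + ∫ s in 0..t, (Φ s)⁻¹ʳ • f s := fun t => by
    rw [← hΦ.inverse_smul_greenIntegral_sub hint, add_sub_cancel]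
  have hy : ∀ t, Φ t • (Φ t)⁻¹ʳ • y t = y t := fun t => by
    rw [smul_smul, Ring.mul_inverse_cancel _ (hΦ.isUnit t), one_smul]
  have hcont : Continuous (fun s => (Φ s)⁻¹ʳ • f s) := hΦ.continuous_inverse.smul hf
  have hderiv : HasDerivAt (fun t => (Φ t)⁻¹ʳ • y t) ((Φ t)⁻¹ʳ • f t) t := by
    rw [funext hvar]
    exact (hcont.integral_hasStrictDerivAt 0 t).hasDerivAt.const_add _
  convert (hΦ.hasDerivAt t).fun_smul hderiv using 1
  · exact (funext hy).symm
  · rw [mul_smul, hy, smul_smul, Ring.mul_inverse_cancel _ (hΦ.isUnit t), one_smul, add_comm]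

end IsFundamentalSolution

/-- `y' = A(t) y` has an exponential dichotomy with constant `c` and exponent `α` whose projection
`P` commutes with the fundamental solution `Φ`. -/
structure HasExponentialDichotomy {𝔸 : Type*} [NormedRing 𝔸] [NormedAlgebra ℝ 𝔸] (A Φ : ℝ → 𝔸)
    (P : 𝔸) (c α : ℝ) : Prop extends IsFundamentalSolution A Φ where
  isIdempotentElem : IsIdempotentElem P
  commute : ∀ t, Commute (Φ t) P
  const_pos : 0 < c
  exponent_pos : 0 < α
  norm_greenFunction_le : ∀ t s, ‖greenFunction Φ P t s‖ ≤ c * Real.exp (-α * |t - s|)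

namespace HasExponentialDichotomy

variable {𝔸 W : Type*} [NormedRing 𝔸] [NormedAlgebra ℝ 𝔸] {A Φ : ℝ → 𝔸} {P : 𝔸} {c α : ℝ}

theorem comp_add_const (h : HasExponentialDichotomy A Φ P c α) (a : ℝ) :
    HasExponentialDichotomy (fun t => A (t + a)) (fun t => Φ (t + a)) P c α where
  __ := h.toIsFundamentalSolution.comp_add_const a
  isIdempotentElem := h.isIdempotentElem
  commute t := h.commute (t + a)
  const_pos := h.const_pos
  exponent_pos := h.exponent_pos
  norm_greenFunction_le t s := by
    simpa [greenFunction] using h.norm_greenFunction_le (t + a) (s + a)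

theorem integrable_bound_mul_const (h : HasExponentialDichotomy A Φ P c α) (K t : ℝ) :
    Integrable (fun s => c * Real.exp (-α * |t - s|) * K) :=
  ((integrable_exp_neg_mul_abs_sub h.exponent_pos t).const_mul c).mul_const K

variable [NormedAddCommGroup W] [Module 𝔸 W] [IsBoundedSMul 𝔸 W]

theorem norm_greenFunction_smul_le (h : HasExponentialDichotomy A Φ P c α) (t s : ℝ) {w : W} {K : ℝ}
    (hw : ‖w‖ ≤ K) : ‖greenFunction Φ P t s • w‖ ≤ c * Real.exp (-α * |t - s|) * K :=
  (norm_smul_le _ _).trans <| mul_le_mul (h.norm_greenFunction_le t s) hw (norm_nonneg _)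
    ((norm_nonneg _).trans (h.norm_greenFunction_le t s))

theorem integrable_greenFunction_smul [HasSummableGeomSeries 𝔸]
    (h : HasExponentialDichotomy A Φ P c α) {f : ℝ → W} (hf : Continuous f) {K : ℝ}
    (hK : ∀ s, ‖f s‖ ≤ K) (t : ℝ) :
    Integrable (fun s => greenFunction Φ P t s • f s) :=
  (h.integrable_bound_mul_const K t).mono' (h.aestronglyMeasurable_greenFunction_smul hf P t)
    (.of_forall fun s => h.norm_greenFunction_smul_le t s (hK s))

variable [NormedSpace ℝ W]

theorem norm_greenIntegral_le_integral (h : HasExponentialDichotomy A Φ P c α) {f : ℝ → W}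
    {g : ℝ → ℝ} {t : ℝ} (hg : Integrable (fun s => c * Real.exp (-α * |t - s|) * g s))
    (hfg : ∀ s, ‖f s‖ ≤ g s) :
    ‖greenIntegral Φ P f t‖ ≤ ∫ s, c * Real.exp (-α * |t - s|) * g s :=
  norm_integral_le_of_norm_le hg (.of_forall fun s => h.norm_greenFunction_smul_le t s (hfg s))

theorem norm_greenIntegral_le (h : HasExponentialDichotomy A Φ P c α) {f : ℝ → W} {K : ℝ}
    (hK : ∀ s, ‖f s‖ ≤ K) (t : ℝ) : ‖greenIntegral Φ P f t‖ ≤ 2 * c / α * K := by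
  refine (h.norm_greenIntegral_le_integral (h.integrable_bound_mul_const K t) hK).trans_eq ?_
  rw [integral_mul_const, integral_const_mul, integral_exp_neg_mul_abs_sub h.exponent_pos]
  ring

variable [HasSummableGeomSeries 𝔸] [IsScalarTower ℝ 𝔸 W]

theorem eq_zero_of_bounded (h : HasExponentialDichotomy A Φ P c α) {w : ℝ → W}
    (hw : ∀ t, HasDerivAt w (A t • w t) t) (hbdd : ∃ C, ∀ t, ‖w t‖ ≤ C) : w = 0 := by
  obtain ⟨C, hC⟩ := hbdd
  obtain ⟨v, hv⟩ := h.exists_eq_smul hw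
  funext t
  have hlim : Tendsto (fun s => greenFunction Φ P t s • w s) (atBot ⊔ atTop) (𝓝 0) := by
    rw [← cocompact_eq_atBot_atTop]
    refine squeeze_zero_norm (fun s => h.norm_greenFunction_smul_le t s (hC s)) ?_
    simpa using ((tendsto_exp_neg_mul_abs_sub_cocompact h.exponent_pos t).const_mul c).mul_const C
  have hstable : P • w t = 0 := by
    refine tendsto_nhds_unique (tendsto_const_nhds.congr' ?_) (hlim.mono_left le_sup_left)
    filter_upwards [eventually_le_atBot t] with s hs
    rw [hv, hv, smul_smul, smul_smul, greenFunction_mul_of_le (h.isUnit s) h.commute hs]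
  have hunstable : -((1 - P) • w t) = 0 := by
    refine tendsto_nhds_unique (tendsto_const_nhds.congr' ?_) (hlim.mono_left le_sup_right)
    filter_upwards [eventually_gt_atTop t] with s hs
    rw [hv, hv, smul_smul, smul_smul, greenFunction_mul_of_lt (h.isUnit s) h.commute hs, neg_smul]
  rwa [sub_smul, one_smul, hstable, sub_zero, neg_eq_zero] at hunstable

variable [CompleteSpace W]

theorem hasDerivAt_greenIntegral_of_bounded (h : HasExponentialDichotomy A Φ P c α) {f : ℝ → W}
    (hf : Continuous f) (hfb : ∃ C, ∀ t, ‖f t‖ ≤ C) (t : ℝ) :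
    HasDerivAt (greenIntegral Φ P f) (A t • greenIntegral Φ P f t + f t) t :=
  let ⟨_, hC⟩ := hfb
  h.hasDerivAt_greenIntegral hf (h.integrable_greenFunction_smul hf hC) t

theorem eq_greenIntegral (h : HasExponentialDichotomy A Φ P c α) {f z : ℝ → W}
    (hf : Continuous f) (hfb : ∃ C, ∀ t, ‖f t‖ ≤ C)
    (hz : ∀ t, HasDerivAt z (A t • z t + f t) t) (hzb : ∃ C, ∀ t, ‖z t‖ ≤ C) :
    z = greenIntegral Φ P f := by
  refine sub_eq_zero.1 (h.eq_zero_of_bounded (fun t => ?_) ?_)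
  · convert (hz t).sub (h.hasDerivAt_greenIntegral_of_bounded hf hfb t) using 1
    rw [Pi.sub_apply, smul_sub, add_sub_add_right_eq_sub]
  · obtain ⟨C, hC⟩ := hfb
    obtain ⟨K, hK⟩ := hzb
    exact ⟨K + 2 * c / α * C, fun t => norm_sub_le_of_le (hK t) (h.norm_greenIntegral_le hC t)⟩

theorem sub_eq_greenIntegral (h : HasExponentialDichotomy A Φ P c α) {B : ℝ → 𝔸} {f g z w : ℝ → W}
    (hF : Continuous fun t => (A t - B t) • w t + (f t - g t))
    (hFb : ∃ C, ∀ t, ‖(A t - B t) • w t + (f t - g t)‖ ≤ C)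
    (hz : ∀ t, HasDerivAt z (A t • z t + f t) t) (hzb : ∃ C, ∀ t, ‖z t‖ ≤ C)
    (hw : ∀ t, HasDerivAt w (B t • w t + g t) t) (hwb : ∃ C, ∀ t, ‖w t‖ ≤ C) :
    z - w = greenIntegral Φ P fun t => (A t - B t) • w t + (f t - g t) := by
  refine h.eq_greenIntegral hF hFb (fun t => ?_) ?_
  · convert (hz t).sub (hw t) using 1
    rw [Pi.sub_apply, smul_sub, sub_smul]
    abel
  · obtain ⟨C, hC⟩ := hzb
    obtain ⟨K, hK⟩ := hwb
    exact ⟨C + K, fun t => norm_sub_le_of_le (hC t) (hK t)⟩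

theorem norm_greenIntegral_sub_le (h : HasExponentialDichotomy A Φ P c α) (hA : Continuous A)
    (hAb : ∃ C, ∀ t, ‖A t‖ ≤ C) {f : ℝ → W} (hf : Continuous f) (hfb : ∃ C, ∀ t, ‖f t‖ ≤ C)
    {M : ℝ} (hM : ∀ t, ‖greenIntegral Φ P f t‖ ≤ M) (a b : ℝ) :
    ‖greenIntegral Φ P f a - greenIntegral Φ P f b‖ ≤ ∫ s, c * Real.exp (-α * |0 - s|) * (M + 1) *
      ‖(A (s + a), f (s + a)) - (A (s + b), f (s + b))‖ := by
  set y := greenIntegral Φ P f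
  have hy := h.hasDerivAt_greenIntegral_of_bounded hf hfb
  have hyc : Continuous y := continuous_iff_continuousAt.2 fun t => (hy t).continuousAt
  set F : ℝ → W := fun s => (A (s + a) - A (s + b)) • y (s + b) + (f (s + a) - f (s + b))
  set δ : ℝ → ℝ := fun s => ‖(A (s + a), f (s + a)) - (A (s + b), f (s + b))‖
  obtain ⟨C, hC⟩ : ∃ C, ∀ s, δ s ≤ C := by
    obtain ⟨C, hC⟩ := hAb
    obtain ⟨K, hK⟩ := hfb
    exact ⟨max (C + C) (K + K), fun s =>
      max_le_max (norm_sub_le_of_le (hC _) (hC _)) (norm_sub_le_of_le (hK _) (hK _))⟩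
  have hM₀ : 0 ≤ M := (norm_nonneg _).trans (hM 0)
  have hFδ : ∀ s, ‖F s‖ ≤ (M + 1) * δ s := fun s => calc
    ‖F s‖ ≤ ‖A (s + a) - A (s + b)‖ * ‖y (s + b)‖ + ‖f (s + a) - f (s + b)‖ :=
      norm_add_le_of_le (norm_smul_le _ _) le_rfl
    _ ≤ δ s * M + δ s := by
      gcongr
      exacts [le_max_left _ _, hM _, le_max_right _ _]
    _ = (M + 1) * δ s := by ring
  have hFC : ∀ s, ‖F s‖ ≤ (M + 1) * C := fun s => (hFδ s).trans (by gcongr; exact hC s)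
  have hyF : y a - y b = greenIntegral (fun s => Φ (s + a)) P F 0 := by
    simpa using congrFun ((h.comp_add_const a).sub_eq_greenIntegral (by fun_prop) ⟨_, hFC⟩
      (fun t => (hy (t + a)).comp_add_const t a) ⟨M, fun t => hM _⟩
      (fun t => (hy (t + b)).comp_add_const t b) ⟨M, fun t => hM _⟩) 0
  have hint : Integrable (fun s => c * Real.exp (-α * |0 - s|) * (M + 1) * δ s) :=
    (h.integrable_bound_mul_const (M + 1) 0).mul_bdd
      (Continuous.aestronglyMeasurable (by fun_prop))
      (.of_forall fun s => (norm_norm _).trans_le (hC s))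
  simp only [mul_assoc _ (M + 1)] at hint ⊢
  exact hyF ▸ (h.comp_add_const a).norm_greenIntegral_le_integral hint hFδ

theorem almostAutomorphic_greenIntegral (h : HasExponentialDichotomy A Φ P c α)
    (hA : AlmostAutomorphic A) {f : ℝ → W} (hf : AlmostAutomorphic f) :
    AlmostAutomorphic (greenIntegral Φ P f) := by
  obtain ⟨K, hK⟩ := hf.exists_norm_le
  exact (hA.prodMk hf).of_norm_sub_le_integral (h.integrable_bound_mul_const _ 0)
    (h.norm_greenIntegral_sub_le hA.1 hA.exists_norm_le hf.1 ⟨K, hK⟩ (h.norm_greenIntegral_le hK))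

end HasExponentialDichotomy

theorem matrix_linear_equation_unique_almost_automorphic_solution_general {𝔸 W : Type*}
    [NormedRing 𝔸] [NormedAlgebra ℝ 𝔸] [HasSummableGeomSeries 𝔸] [NormedAddCommGroup W]
    [NormedSpace ℝ W] [CompleteSpace W] [Module 𝔸 W] [IsBoundedSMul 𝔸 W] [IsScalarTower ℝ 𝔸 W]
    {A Φ : ℝ → 𝔸} {P : 𝔸} {c α : ℝ} (h : HasExponentialDichotomy A Φ P c α)
    (hA : AlmostAutomorphic A) {f : ℝ → W} (hf : AlmostAutomorphic f) :
    (∀ t, HasDerivAt (greenIntegral Φ P f) (A t • greenIntegral Φ P f t + f t) t) ∧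
    (∃ C, ∀ t, ‖greenIntegral Φ P f t‖ ≤ C) ∧
    (∀ z : ℝ → W, (∀ t, HasDerivAt z (A t • z t + f t) t) → (∃ C, ∀ t, ‖z t‖ ≤ C) →
      z = greenIntegral Φ P f) ∧
    AlmostAutomorphic (greenIntegral Φ P f) ∧
    (∀ t, ‖greenIntegral Φ P f t‖ ≤ (2 * c / α) * ⨆ t, ‖f t‖) := by
  obtain ⟨K, hK⟩ := hf.exists_norm_le
  have hsup : ∀ s, ‖f s‖ ≤ ⨆ t, ‖f t‖ := le_ciSup ⟨K, Set.forall_mem_range.2 hK⟩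
  exact ⟨h.hasDerivAt_greenIntegral_of_bounded hf.1 ⟨K, hK⟩, ⟨_, h.norm_greenIntegral_le hK⟩,
    fun z hz hzb => h.eq_greenIntegral hf.1 ⟨K, hK⟩ hz hzb,
    h.almostAutomorphic_greenIntegral hA hf, h.norm_greenIntegral_le hsup⟩

instance isBoundedSMul_matrix {n R V : Type*} [Fintype n] [DecidableEq n] [NormedRing R]
    [SeminormedAddCommGroup V] [Module R V] [IsBoundedSMul R V] :
    IsBoundedSMul (Matrix n n R) (n → V) := by
  refine .of_norm_smul_le fun M v => (pi_norm_le_iff_of_nonneg (by positivity)).2 fun i => ?_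
  calc ‖∑ j, M i j • v j‖ ≤ ∑ j, ‖M i j‖ * ‖v‖ :=
        norm_sum_le_of_le _ fun j _ =>
          (norm_smul_le _ _).trans (by gcongr; exact norm_le_pi_norm v j)
    _ = (∑ j, ‖M i j‖) * ‖v‖ := (Finset.sum_mul ..).symm
    _ ≤ ‖M‖ * ‖v‖ := by
      gcongr
      rw [Matrix.linfty_opNorm_def]
      simpa only [NNReal.coe_sum, coe_nnnorm] using NNReal.coe_le_coe.2
        (Finset.le_sup (f := fun i => ∑ j, ‖M i j‖₊) (Finset.mem_univ i))

theorem greenMat_eq_greenFunction {p : ℕ} (Φ : ℝ → Matrix (Fin p) (Fin p) ℂ)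
    (P : Matrix (Fin p) (Fin p) ℂ) : GreenMat Φ P = greenFunction Φ P := by
  funext t s
  rw [GreenMat, greenFunction, Matrix.nonsing_inv_eq_ringInverse]

theorem integral_matSMulVec_greenMat {V : Type*} [NormedAddCommGroup V] [NormedSpace ℂ V] {p : ℕ}
    (Φ : ℝ → Matrix (Fin p) (Fin p) ℂ) (P : Matrix (Fin p) (Fin p) ℂ) (f : ℝ → Fin p → V) (t : ℝ) :
    ∫ s, matSMulVec (GreenMat Φ P t s) (f s) = greenIntegral Φ P f t := by
  rw [greenMat_eq_greenFunction]
  rfl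

theorem matrix_linear_equation_unique_almost_automorphic_solution
    {V : Type*} [NormedAddCommGroup V] [NormedSpace ℂ V] [CompleteSpace V] {p : ℕ}
    (A ΦA : ℝ → Matrix (Fin p) (Fin p) ℂ)
    (hAc : Continuous A) (hAb : ∃ C, ∀ t, ‖A t‖ ≤ C)
    (hAaa : ∀ i j : Fin p, AlmostAutomorphic (fun t => A t i j))
    (hΦA : IsFundamentalMatrix A ΦA)
    (P : Matrix (Fin p) (Fin p) ℂ) (hP : P * P = P)
    (hPcomm : ∀ t : ℝ, ΦA t * P = P * ΦA t)
    (c α : ℝ) (hc : 0 < c) (hα : 0 < α)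
    (hdich : ∀ t s : ℝ, ‖GreenMat ΦA P t s‖ ≤ c * Real.exp (-α * |t - s|))
    (f : ℝ → (Fin p → V)) (hfc : Continuous f) (hfb : ∃ C, ∀ t, ‖f t‖ ≤ C)
    (hfaa : AlmostAutomorphic f) :
    (∀ (t : ℝ) (i : Fin p),
      HasDerivAt (fun t => (∫ s : ℝ, matSMulVec (GreenMat ΦA P t s) (f s)) i)
        ((∑ j : Fin p, A t i j • (∫ s : ℝ, matSMulVec (GreenMat ΦA P t s) (f s)) j) + f t i)
        t) ∧
    (∃ C, ∀ t : ℝ, ‖∫ s : ℝ, matSMulVec (GreenMat ΦA P t s) (f s)‖ ≤ C) ∧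
    (∀ z : ℝ → (Fin p → V),
      (∀ (t : ℝ) (i : Fin p),
        HasDerivAt (fun t => z t i) ((∑ j : Fin p, A t i j • z t j) + f t i) t) →
      (∃ C, ∀ t : ℝ, ‖z t‖ ≤ C) →
      z = fun t => ∫ s : ℝ, matSMulVec (GreenMat ΦA P t s) (f s)) ∧
    AlmostAutomorphic (fun t => ∫ s : ℝ, matSMulVec (GreenMat ΦA P t s) (f s)) ∧
    (∀ t : ℝ, ‖∫ s : ℝ, matSMulVec (GreenMat ΦA P t s) (f s)‖ ≤ (2 * c / α) * ⨆ t : ℝ, ‖f t‖) := by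
  have : CompleteSpace (Matrix (Fin p) (Fin p) ℂ) := FiniteDimensional.complete ℂ _
  have h : HasExponentialDichotomy A ΦA P c α :=
    { hasDerivAt := hΦA.1
      isUnit := hΦA.2
      isIdempotentElem := hP
      commute := hPcomm
      const_pos := hc
      exponent_pos := hα
      norm_greenFunction_le := greenMat_eq_greenFunction ΦA P ▸ hdich }
  have key := matrix_linear_equation_unique_almost_automorphic_solution_general h
    (.of_matrix_entries hAaa) hfaa
  simp only [hasDerivAt_pi] at key
  simp only [integral_matSMulVec_greenMat]
  exact key
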